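/- For every integer n ≥ 1 there exists a constant C = C(n) > 0, depending only on n, with the following property: for every R > 0, every measurable function r : Sⁿ → ℝ satisfying 0 < r(z) ≤ R for all z ∈ Sⁿ, every point Y ∈ ℝ^{n+1} with |Y| ≤ R, and every τ > 0, one has ∫_{Sⁿ} (4πτ)^{-n/2} exp(−|r(z)·z − Y|² / (4τ)) · r(z)^{n+1} dσ(z) ≤ C·R. -/

import Mathlib

open MeasureTheory Real

lemma aux_ray {E : Type*} [NormedAddCommGroup E] [NormedSpace ℝ E] (z e : E) (hz : ‖z‖ = 1)
    (he : ‖e‖ = 1) (r ρ : ℝ) (hr : 0 ≤ r) (hρ : 0 ≤ ρ) :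
    ρ * ‖z - e‖ ≤ 2 * ‖r • z - ρ • e‖ := by
  have h1 : ρ * ‖z - e‖ = ‖(ρ - r) • z + (r • z - ρ • e)‖ := by
    rw [← abs_of_nonneg hρ, ← Real.norm_eq_abs, ← norm_smul, Real.norm_eq_abs, abs_of_nonneg hρ]
    congr 1
    module
  have h2 : ‖(ρ - r) • z‖ ≤ ‖r • z - ρ • e‖ := by
    have := abs_norm_sub_norm_le (r • z) (ρ • e)
    rw [norm_smul, norm_smul, hz, he, Real.norm_eq_abs, Real.norm_eq_abs, abs_of_nonneg hr,
      abs_of_nonneg hρ, mul_one, mul_one] at this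
    rw [norm_smul, hz, mul_one, Real.norm_eq_abs, abs_sub_comm]
    exact this
  have h3 := norm_add_le ((ρ - r) • z) (r • z - ρ • e)
  linarith

lemma aux_normalize {E : Type*} [NormedAddCommGroup E] [NormedSpace ℝ E] (x y : E)
    (hx : x ≠ 0) (hy : 1 ≤ ‖y‖) :
    ‖‖x‖⁻¹ • x - ‖y‖⁻¹ • y‖ ≤ 2 * ‖x - y‖ := by
  have hy0 : y ≠ 0 := by
    rintro rfl
    simp at hy
    linarith
  have hx' : ‖x‖ ≠ 0 := norm_ne_zero_iff.2 hx
  have hy' : ‖y‖ ≠ 0 := norm_ne_zero_iff.2 hy0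
  have h := aux_ray (‖x‖⁻¹ • x) (‖y‖⁻¹ • y) (by simp [norm_smul, hx'])
    (by simp [norm_smul, hy']) ‖x‖ ‖y‖ (norm_nonneg _) (norm_nonneg _)
  rw [smul_smul, smul_smul, mul_inv_cancel₀ hx', mul_inv_cancel₀ hy', one_smul, one_smul] at h
  nlinarith [norm_nonneg (‖x‖⁻¹ • x - ‖y‖⁻¹ • y)]

lemma aux_small (n : ℕ) : ∃ A : NNReal, ∀ e : EuclideanSpace ℝ (Fin (n + 1)), ‖e‖ = 1 →
    ∀ s : ℝ, 0 ≤ s → s ≤ 1 →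
    μH[(n : ℝ)] (Metric.sphere (0 : EuclideanSpace ℝ (Fin (n + 1))) 1 ∩ Metric.closedBall e s)
      ≤ A * ENNReal.ofReal s ^ n := by
  obtain ⟨K, hK⟩ : ∃ K : NNReal, LipschitzWith K
      (fun w : Fin n → ℝ => (WithLp.toLp 2 w : EuclideanSpace ℝ (Fin n))) :=
    ⟨_, PiLp.lipschitzWith_toLp 2 (fun _ : Fin n => ℝ)⟩
  refine ⟨(2 * K) ^ n * 4 ^ n, fun e he s hs0 hs1 => ?_⟩
  have he0 : e ≠ 0 := by
    rintro rfl
    simp at he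
  haveI : Fact (Module.finrank ℝ (EuclideanSpace ℝ (Fin (n + 1))) = n + 1) := ⟨by simp⟩
  let b := (OrthonormalBasis.fromOrthogonalSpanSingleton (𝕜 := ℝ) n he0).repr
  let f : (Fin n → ℝ) → EuclideanSpace ℝ (Fin (n + 1)) := fun w =>
    e + ((b.symm (WithLp.toLp 2 w) : (Submodule.span ℝ {e})ᗮ) : EuclideanSpace ℝ (Fin (n + 1)))
  have hf1 : ∀ w, 1 ≤ ‖f w‖ := by
    intro w
    have ho : inner ℝ e ((b.symm (WithLp.toLp 2 w) : (Submodule.span ℝ {e})ᗮ) :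
        EuclideanSpace ℝ (Fin (n + 1))) = 0 :=
      Submodule.mem_orthogonal_singleton_iff_inner_right.1 (b.symm (WithLp.toLp 2 w)).2
    have := norm_add_sq_eq_norm_sq_add_norm_sq_of_inner_eq_zero _ _ ho
    rw [he] at this
    change 1 ≤ ‖e + _‖
    nlinarith [norm_nonneg (e + ((b.symm (WithLp.toLp 2 w) : (Submodule.span ℝ {e})ᗮ) :
        EuclideanSpace ℝ (Fin (n + 1)))), norm_nonneg ((b.symm (WithLp.toLp 2 w) : (Submodule.span ℝ {e})ᗮ) :
        EuclideanSpace ℝ (Fin (n + 1)))]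
  let g : (Fin n → ℝ) → EuclideanSpace ℝ (Fin (n + 1)) := fun w => ‖f w‖⁻¹ • f w
  have hg : LipschitzWith (2 * K) g := by
    apply LipschitzWith.of_dist_le_mul
    intro x y
    have h0 : f x ≠ 0 := by
      intro h
      have := hf1 x
      rw [h] at this
      simp at this
      linarith
    have h1 := aux_normalize (f x) (f y) h0 (hf1 y)
    have h2 : ‖f x - f y‖ ≤ K * dist x y := by
      have h3 := hK.dist_le_mul x y
      have h4 : f x - f y = ((b.symm (WithLp.toLp 2 x) - b.symm (WithLp.toLp 2 y) :
        (Submodule.span ℝ {e})ᗮ) : EuclideanSpace ℝ (Fin (n + 1))) := by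
        simp [f]
      rw [h4, ← Submodule.coe_norm, ← dist_eq_norm, LinearIsometryEquiv.dist_map]
      exact h3
    rw [dist_eq_norm]
    push_cast
    change ‖‖f x‖⁻¹ • f x - ‖f y‖⁻¹ • f y‖ ≤ _
    linarith
  have hsub : Metric.sphere (0 : EuclideanSpace ℝ (Fin (n + 1))) 1 ∩ Metric.closedBall e s ⊆
      g '' (Metric.closedBall 0 (2 * s)) := by
    rintro z ⟨hz, hze⟩
    rw [mem_sphere_zero_iff_norm] at hz
    rw [mem_closedBall_iff_norm] at hze
    set c : ℝ := inner ℝ e z with hc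
    have hd : ‖z - e‖ ^ 2 = 2 - 2 * c := by
      rw [norm_sub_sq_real, hz, he, real_inner_comm]
      ring
    have hd0 := norm_nonneg (z - e)
    have hc1 : 1 / 2 ≤ c := by nlinarith
    have hc2 : c ≤ 1 := by nlinarith
    have hcp : 0 < c := by linarith
    have hmem : c⁻¹ • z - e ∈ (Submodule.span ℝ {e})ᗮ := by
      rw [Submodule.mem_orthogonal_singleton_iff_inner_right, inner_sub_right, inner_smul_right,
        real_inner_self_eq_norm_sq, he, ← hc]
      field_simp
      norm_num
    have hn : ‖c⁻¹ • z - e‖ ≤ 2 * s := by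
      have e1 : c⁻¹ • z - e = (c⁻¹ - 1) • z + (z - e) := by module
      rw [e1]
      refine (norm_add_le _ _).trans ?_
      have hci : 1 ≤ c⁻¹ := (one_le_inv₀ hcp).2 hc2
      rw [norm_smul, hz, mul_one, Real.norm_eq_abs, abs_of_nonneg (by linarith)]
      have : c⁻¹ - 1 ≤ s := by
        have : c⁻¹ - 1 = (1 - c) / c := by field_simp
        rw [this, div_le_iff₀ hcp]
        nlinarith
      linarith
    refine ⟨(b ⟨_, hmem⟩).ofLp, ?_, ?_⟩
    · rw [mem_closedBall_zero_iff, pi_norm_le_iff_of_nonneg (by linarith)]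
      intro i
      refine (PiLp.norm_apply_le (b ⟨_, hmem⟩) i).trans ?_
      rw [LinearIsometryEquiv.norm_map]
      exact hn
    · have hfz : f (b ⟨_, hmem⟩).ofLp = c⁻¹ • z := by
        simp [f]
      change ‖f _‖⁻¹ • f _ = z
      rw [hfz, norm_smul, hz, mul_one, Real.norm_eq_abs, abs_of_pos (inv_pos.2 hcp), smul_smul,
        inv_inv, mul_inv_cancel₀ hcp.ne', one_smul]
  refine (measure_mono hsub).trans ?_
  refine (hg.hausdorffMeasure_image_le (Nat.cast_nonneg n) _).trans ?_
  have hpi : (μH[(n : ℝ)] : Measure (Fin n → ℝ)) = volume := by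
    simpa using hausdorffMeasure_pi_real (ι := Fin n)
  rw [hpi, Real.volume_pi_closedBall _ (by linarith), Fintype.card_fin, ENNReal.rpow_natCast,
    ENNReal.ofReal_pow (by linarith), show 2 * (2 * s) = 4 * s by ring,
    ENNReal.ofReal_mul (by norm_num)]
  push_cast
  rw [mul_pow (ENNReal.ofReal 4), ← mul_assoc]
  simp

lemma aux_finite (n : ℕ) :
    μH[(n : ℝ)] (Metric.sphere (0 : EuclideanSpace ℝ (Fin (n + 1))) 1) < ⊤ := by
  obtain ⟨A, hA⟩ := aux_small n
  refine (isCompact_sphere (0 : EuclideanSpace ℝ (Fin (n + 1))) 1).measure_lt_top_of_nhdsWithin ?_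
  intro x hx
  refine ⟨Metric.sphere (0 : EuclideanSpace ℝ (Fin (n + 1))) 1 ∩ Metric.closedBall x 1, ?_, ?_⟩
  · exact inter_mem_nhdsWithin _ (Metric.closedBall_mem_nhds x one_pos)
  · refine (hA x (by simpa using hx) 1 zero_le_one le_rfl).trans_lt ?_
    simp

lemma aux_all (n : ℕ) : ∃ A : NNReal, ∀ e : EuclideanSpace ℝ (Fin (n + 1)), ‖e‖ = 1 →
    ∀ s : ℝ, 0 ≤ s →
    μH[(n : ℝ)] (Metric.sphere (0 : EuclideanSpace ℝ (Fin (n + 1))) 1 ∩ Metric.closedBall e s)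
      ≤ A * ENNReal.ofReal s ^ n := by
  obtain ⟨A, hA⟩ := aux_small n
  obtain ⟨B, hB⟩ := ENNReal.lt_iff_exists_nnreal_btwn.1 (aux_finite n)
  refine ⟨A + B, fun e he s hs => ?_⟩
  rcases le_total s 1 with h | h
  · refine (hA e he s hs h).trans ?_
    gcongr
    simp
  · refine (measure_mono Set.inter_subset_left).trans (hB.1.le.trans ?_)
    have h1 : (1 : ENNReal) ≤ ENNReal.ofReal s ^ n :=
      one_le_pow₀ (by simpa using h)
    calc (B : ENNReal) = B * 1 := by simp
      _ ≤ _ := by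
        gcongr
        simp

lemma aux_gauss (n : ℕ) (hn : 1 ≤ n) : ∃ C : ℝ, 0 ≤ C ∧
    ∀ e : EuclideanSpace ℝ (Fin (n + 1)), ‖e‖ = 1 → ∀ l : ℝ, 0 ≤ l →
    ∫ z in Metric.sphere (0 : EuclideanSpace ℝ (Fin (n + 1))) 1,
      l ^ n * Real.exp (-(l * ‖z - e‖) ^ 2 / 16) ∂(μH[(n : ℝ)]) ≤ C := by
  obtain ⟨A, hA⟩ := aux_all n
  have hsum : Summable (fun k : ℕ => ((k : ℝ) + 1) ^ n * Real.exp (-(k : ℝ) / 16)) := by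
    have h := summable_pow_mul_geometric_of_norm_lt_one (R := ℝ) n (r := Real.exp (-1 / 16)) (by
      rw [Real.norm_eq_abs, abs_of_pos (Real.exp_pos _)]
      rw [Real.exp_lt_one_iff]; norm_num)
    have h2 := ((summable_nat_add_iff 1).2 h).mul_left (Real.exp (1 / 16))
    refine h2.congr fun k => ?_
    push_cast
    rw [← Real.exp_nat_mul, mul_left_comm, ← Real.exp_add]
    congr 2
    push_cast
    ring
  set a : ℕ → ℝ := fun k => ((k : ℝ) + 1) ^ n * Real.exp (-(k : ℝ) / 16) with ha
  have ha0 : ∀ k, 0 ≤ a k := fun k => by positivity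
  refine ⟨A * ∑' k, a k, mul_nonneg A.2 (tsum_nonneg ha0), fun e he l hl => ?_⟩
  rcases hl.eq_or_lt with rfl | hl
  · rw [zero_pow (by omega)]
    simp only [zero_mul, integral_zero]
    exact mul_nonneg A.2 (tsum_nonneg ha0)
  rw [integral_eq_lintegral_of_nonneg_ae (Filter.Eventually.of_forall fun z => by positivity)
    (by fun_prop)]
  refine ENNReal.toReal_le_of_le_ofReal (mul_nonneg A.2 (tsum_nonneg ha0)) ?_
  have hpt : ∀ z : EuclideanSpace ℝ (Fin (n + 1)),
      ENNReal.ofReal (l ^ n * Real.exp (-(l * ‖z - e‖) ^ 2 / 16)) ≤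
      ∑' k : ℕ, (Metric.closedBall e (((k : ℝ) + 1) / l)).indicator
        (fun _ => ENNReal.ofReal (l ^ n * Real.exp (-(k : ℝ) / 16))) z := by
    intro z
    refine le_trans ?_ (ENNReal.le_tsum ⌊l * ‖z - e‖⌋₊)
    have h0 : 0 ≤ l * ‖z - e‖ := by positivity
    have h1 := Nat.floor_le h0
    have h2 := Nat.lt_floor_add_one (l * ‖z - e‖)
    rw [Set.indicator_of_mem]
    · apply ENNReal.ofReal_le_ofReal
      gcongr
      set m := ⌊l * ‖z - e‖⌋₊
      have h3 : (m : ℝ) ≤ (m : ℝ) ^ 2 := by exact_mod_cast Nat.le_self_pow two_ne_zero m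
      have h4 : (m : ℝ) ^ 2 ≤ (l * ‖z - e‖) ^ 2 := by gcongr
      linarith
    · rw [mem_closedBall_iff_norm, le_div_iff₀ hl, mul_comm]
      exact h2.le
  refine (lintegral_mono hpt).trans ?_
  rw [lintegral_tsum (fun k => (measurable_const.indicator measurableSet_closedBall).aemeasurable)]
  rw [ENNReal.ofReal_mul (NNReal.coe_nonneg A), ENNReal.ofReal_tsum_of_nonneg ha0 hsum, ENNReal.ofReal_coe_nnreal,
    ← ENNReal.tsum_mul_left]
  refine ENNReal.tsum_le_tsum fun k => ?_
  rw [lintegral_indicator_const measurableSet_closedBall,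
    Measure.restrict_apply measurableSet_closedBall, Set.inter_comm]
  refine (mul_le_mul_right (hA e he _ (by positivity)) _).trans ?_
  rw [mul_left_comm, ← ENNReal.ofReal_pow (by positivity), ← ENNReal.ofReal_mul (by positivity)]
  refine le_of_eq ?_
  congr 2
  rw [ha, div_pow]
  field_simp

lemma aux_bdd (n : ℕ) (t : ℝ) (ht : 0 ≤ t) :
    t ^ n * Real.exp (-t ^ 2 / 16) ≤ 1 + 16 ^ n * (n.factorial : ℝ) := by
  have h1 := Real.pow_div_factorial_le_exp (t ^ 2 / 16) (by positivity) n
  rw [div_le_iff₀ (by positivity), div_pow, div_le_iff₀ (by positivity)] at h1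
  have h2 : t ^ n ≤ 1 + (t ^ 2) ^ n := by
    rw [← pow_mul, mul_comm, pow_mul]
    nlinarith [sq_nonneg (t ^ n - 1)]
  have h3 : Real.exp (-t ^ 2 / 16) ≤ 1 := Real.exp_le_one_iff.2 (by nlinarith [sq_nonneg t])
  have h4 : Real.exp (t ^ 2 / 16) * Real.exp (-t ^ 2 / 16) = 1 := by
    rw [← Real.exp_add, ← Real.exp_zero]
    congr 1
    ring
  have h5 := Real.exp_pos (-t ^ 2 / 16)
  calc t ^ n * Real.exp (-t ^ 2 / 16)
      ≤ (1 + Real.exp (t ^ 2 / 16) * n.factorial * 16 ^ n) * Real.exp (-t ^ 2 / 16) := by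
        gcongr
        linarith
    _ = Real.exp (-t ^ 2 / 16) +
        (Real.exp (t ^ 2 / 16) * Real.exp (-t ^ 2 / 16)) * (16 ^ n * n.factorial) := by ring
    _ ≤ _ := by
        rw [h4]
        linarith

lemma aux_pref (n : ℕ) (τ : ℝ) (hτ : 0 < τ) :
    (4 * π * τ) ^ (-(n : ℝ) / 2) ≤ ((√τ)⁻¹) ^ n := by
  have h : ((√τ)⁻¹) ^ n = τ ^ (-(n : ℝ) / 2) := by
    rw [Real.sqrt_eq_rpow, ← Real.rpow_neg hτ.le, ← Real.rpow_natCast, ← Real.rpow_mul hτ.le]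
    congr 1
    ring
  rw [h]
  refine Real.rpow_le_rpow_of_nonpos hτ ?_ ?_
  · nlinarith [Real.pi_gt_three]
  · have : (0 : ℝ) ≤ n := Nat.cast_nonneg n
    linarith

lemma aux_pt (n : ℕ) (R r ρ τ : ℝ) (z e : EuclideanSpace ℝ (Fin (n + 1))) (hz : ‖z‖ = 1)
    (he : ‖e‖ = 1) (hr : 0 < r) (hrR : r ≤ R) (hρ : 0 ≤ ρ) (hτ : 0 < τ) :
    (4 * π * τ) ^ (-(n : ℝ) / 2) * Real.exp (-‖r • z - ρ • e‖ ^ 2 / (4 * τ)) * r ^ (n + 1) ≤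
      R * ((1 + 16 ^ n * (n.factorial : ℝ)) +
        2 ^ n * ((ρ / √τ) ^ n * Real.exp (-((ρ / √τ) * ‖z - e‖) ^ 2 / 16))) := by
  have hs : 0 < √τ := Real.sqrt_pos.2 hτ
  have hss : √τ ^ 2 = τ := Real.sq_sqrt hτ.le
  have hR : 0 < R := hr.trans_le hrR
  have hkey : (r / √τ) ^ n * Real.exp (-‖r • z - ρ • e‖ ^ 2 / (4 * τ)) ≤
      (1 + 16 ^ n * (n.factorial : ℝ)) +
        2 ^ n * ((ρ / √τ) ^ n * Real.exp (-((ρ / √τ) * ‖z - e‖) ^ 2 / 16)) := by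
    rcases le_total (2 * ρ) r with h | h
    · have h1 : r / 2 ≤ ‖r • z - ρ • e‖ := by
        have := norm_sub_norm_le (r • z) (ρ • e)
        rw [norm_smul, norm_smul, hz, he, Real.norm_eq_abs, Real.norm_eq_abs, abs_of_nonneg hr.le,
          abs_of_nonneg hρ] at this
        linarith
      have h2 : Real.exp (-‖r • z - ρ • e‖ ^ 2 / (4 * τ)) ≤ Real.exp (-(r / √τ) ^ 2 / 16) := by
        apply Real.exp_le_exp.2
        have : -(r / √τ) ^ 2 / 16 = -(r / 2) ^ 2 / (4 * τ) := by
          rw [div_pow, hss]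
          field_simp
          norm_num
        rw [this]
        gcongr
      have h3 := aux_bdd n (r / √τ) (by positivity)
      calc _ ≤ (r / √τ) ^ n * Real.exp (-(r / √τ) ^ 2 / 16) := by gcongr
        _ ≤ _ := h3
        _ ≤ _ := le_add_of_nonneg_right (by positivity)
    · have h1 : ρ * ‖z - e‖ / 2 ≤ ‖r • z - ρ • e‖ := by
        have := aux_ray z e hz he r ρ hr.le hρ
        linarith
      have h2 : Real.exp (-‖r • z - ρ • e‖ ^ 2 / (4 * τ)) ≤
          Real.exp (-((ρ / √τ) * ‖z - e‖) ^ 2 / 16) := by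
        apply Real.exp_le_exp.2
        have : -((ρ / √τ) * ‖z - e‖) ^ 2 / 16 = -(ρ * ‖z - e‖ / 2) ^ 2 / (4 * τ) := by
          rw [mul_pow, div_pow, hss]
          field_simp
          ring
        rw [this]
        gcongr
      calc _ ≤ (2 * (ρ / √τ)) ^ n * Real.exp (-((ρ / √τ) * ‖z - e‖) ^ 2 / 16) := by
            gcongr
            rw [← mul_div_assoc]
            gcongr
        _ = 2 ^ n * ((ρ / √τ) ^ n * Real.exp (-((ρ / √τ) * ‖z - e‖) ^ 2 / 16)) := by
            rw [mul_pow, mul_assoc]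
        _ ≤ _ := le_add_of_nonneg_left (by positivity)
  calc _ ≤ ((√τ)⁻¹) ^ n * Real.exp (-‖r • z - ρ • e‖ ^ 2 / (4 * τ)) * r ^ (n + 1) := by
        gcongr
        exact aux_pref n τ hτ
    _ = r * ((r / √τ) ^ n * Real.exp (-‖r • z - ρ • e‖ ^ 2 / (4 * τ))) := by
        rw [div_eq_mul_inv r, mul_pow]
        ring
    _ ≤ _ := by gcongr

/-- For every integer `n ≥ 1` there exists a constant `C = C(n) > 0` such that for all `R > 0`,
all measurable radial functions `r` with `0 < r(z) ≤ R` on the unit sphere `Sⁿ ⊆ ℝ^{n+1}`,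
all `Y` with `|Y| ≤ R` and all `τ > 0`, the Gaussian-weighted integral over the sphere
is bounded by `C · R`. -/
theorem stmt_0 (n : ℕ) (hn : 1 ≤ n) :
    ∃ C : ℝ, 0 < C ∧
      ∀ (R : ℝ), 0 < R →
      ∀ r : EuclideanSpace ℝ (Fin (n + 1)) → ℝ, Measurable r →
      (∀ z ∈ Metric.sphere (0 : EuclideanSpace ℝ (Fin (n + 1))) 1, 0 < r z ∧ r z ≤ R) →
      ∀ Y : EuclideanSpace ℝ (Fin (n + 1)), ‖Y‖ ≤ R →
      ∀ τ : ℝ, 0 < τ →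
      ∫ z in Metric.sphere (0 : EuclideanSpace ℝ (Fin (n + 1))) 1,
          (4 * π * τ) ^ (-(n : ℝ) / 2) * Real.exp (-‖r z • z - Y‖ ^ 2 / (4 * τ)) *
            r z ^ (n + 1) ∂(μH[(n : ℝ)]) ≤ C * R := by
  obtain ⟨C, hC, hG⟩ := aux_gauss n hn
  set M : ℝ := (μH[(n : ℝ)] : Measure (EuclideanSpace ℝ (Fin (n + 1)))).real
    (Metric.sphere (0 : EuclideanSpace ℝ (Fin (n + 1))) 1) with hM
  have hM0 : 0 ≤ M := measureReal_nonneg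
  refine ⟨M * (1 + 16 ^ n * (n.factorial : ℝ)) + 2 ^ n * C + 1, by positivity, ?_⟩
  intro R hR r _ hr Y _ τ hτ
  obtain ⟨e, he, hYe⟩ : ∃ e : EuclideanSpace ℝ (Fin (n + 1)), ‖e‖ = 1 ∧ Y = ‖Y‖ • e := by
    by_cases hY : Y = 0
    · exact ⟨EuclideanSpace.single 0 1, by simp, by simp [hY]⟩
    · have : ‖Y‖ ≠ 0 := norm_ne_zero_iff.2 hY
      exact ⟨‖Y‖⁻¹ • Y, by simp [norm_smul, this], by simp [smul_smul, this]⟩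
  set ρ := ‖Y‖
  have hρ : 0 ≤ ρ := norm_nonneg Y
  haveI : IsFiniteMeasure ((μH[(n : ℝ)] : Measure (EuclideanSpace ℝ (Fin (n + 1)))).restrict
    (Metric.sphere (0 : EuclideanSpace ℝ (Fin (n + 1))) 1)) :=
    ⟨by rw [Measure.restrict_apply_univ]; exact aux_finite n⟩
  have hint : Integrable (fun z : EuclideanSpace ℝ (Fin (n + 1)) =>
      (ρ / √τ) ^ n * Real.exp (-((ρ / √τ) * ‖z - e‖) ^ 2 / 16))
      ((μH[(n : ℝ)] : Measure (EuclideanSpace ℝ (Fin (n + 1)))).restrict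
      (Metric.sphere (0 : EuclideanSpace ℝ (Fin (n + 1))) 1)) := by
    refine Integrable.of_bound (by fun_prop) ((ρ / √τ) ^ n) (Filter.Eventually.of_forall fun z => ?_)
    rw [Real.norm_eq_abs, abs_of_nonneg (by positivity)]
    refine mul_le_of_le_one_right (by positivity) (Real.exp_le_one_iff.2 ?_)
    nlinarith [sq_nonneg ((ρ / √τ) * ‖z - e‖)]
  have hmem := ae_restrict_mem (μ := (μH[(n : ℝ)] : Measure (EuclideanSpace ℝ (Fin (n + 1)))))
    (s := Metric.sphere (0 : EuclideanSpace ℝ (Fin (n + 1))) 1) Metric.isClosed_sphere.measurableSet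
  have hmono := integral_mono_of_nonneg
    (μ := (μH[(n : ℝ)] : Measure (EuclideanSpace ℝ (Fin (n + 1)))).restrict
      (Metric.sphere (0 : EuclideanSpace ℝ (Fin (n + 1))) 1))
    (f := fun z => (4 * π * τ) ^ (-(n : ℝ) / 2) * Real.exp (-‖r z • z - Y‖ ^ 2 / (4 * τ)) *
            r z ^ (n + 1))
    (g := fun z => R * ((1 + 16 ^ n * (n.factorial : ℝ)) +
        2 ^ n * ((ρ / √τ) ^ n * Real.exp (-((ρ / √τ) * ‖z - e‖) ^ 2 / 16))))
    (by
      filter_upwards [hmem] with z hz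
      have := (hr z hz).1
      simp only [Pi.zero_apply]
      positivity)
    (((integrable_const _).add (hint.const_mul _)).const_mul _)
    (by
      filter_upwards [hmem] with z hz
      have h := aux_pt n R (r z) ρ τ z e (by simpa using hz) he (hr z hz).1 (hr z hz).2 hρ hτ
      rw [← hYe] at h
      exact h)
  refine hmono.trans ?_
  rw [integral_const_mul, integral_add (integrable_const _) (hint.const_mul _),
    integral_const_mul, integral_const, measureReal_restrict_apply_univ, smul_eq_mul, ← hM, mul_comm]
  have := hG e he (ρ / √τ) (by positivity)
  refine mul_le_mul_of_nonneg_right ?_ hR.le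
  have h2 : (0 : ℝ) ≤ 2 ^ n := by positivity
  have h3 := mul_le_mul_of_nonneg_left this h2
  linarith
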